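/- arXiv:2009.03044 — 4 statements merged into one kernel-verified Lean document; each statement's English description precedes it below -/
import Mathlib

section
/- Let n ≥ 2 and let E ⊂ ℝⁿ be a compact set which is the closure of its interior and whose topological boundary ∂E is a compact C^∞ (n−1)-dimensional embedded submanifold of ℝⁿ. Then for every continuously differentiable compactly supported vector field U : ℝⁿ → ℝⁿ with ‖U(x)‖ ≤ 1 for all x, one has ∫_E div U(x) dx ≤ μH^{n−1}(∂E); consequently TV(χ_E) ≤ μH^{n−1}(∂E). -/
open MeasureTheory
open scoped ENNReal

/-- The divergence `div U x = ∑ i ∂Uᵢ/∂xᵢ (x)` of a vector field on `ℝⁿ`. -/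
noncomputable def vecDiv {n : ℕ} (U : EuclideanSpace ℝ (Fin n) → EuclideanSpace ℝ (Fin n))
    (x : EuclideanSpace ℝ (Fin n)) : ℝ :=
  ∑ i, (inner ℝ (fderiv ℝ U x (EuclideanSpace.single i 1)) (EuclideanSpace.single i (1 : ℝ)) : ℝ)

/-- The total variation of `f : ℝⁿ → ℝ`, defined via the dual (sup-based) formula over
continuously differentiable, compactly supported test vector fields bounded by `1`. -/
noncomputable def totalVariation {n : ℕ} (f : EuclideanSpace ℝ (Fin n) → ℝ) : ℝ≥0∞ :=
  ⨆ U : {U : EuclideanSpace ℝ (Fin n) → EuclideanSpace ℝ (Fin n) //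
      ContDiff ℝ 1 U ∧ HasCompactSupport U ∧ ∀ x, ‖U x‖ ≤ 1},
    ENNReal.ofReal (∫ x, f x * vecDiv U.1 x)

/-- `S` is a compact `C^∞` embedded hypersurface ((n−1)-dimensional submanifold) of `ℝⁿ`. -/
def IsSmoothCompactHypersurface {n : ℕ} (S : Set (EuclideanSpace ℝ (Fin n))) : Prop :=
  IsCompact S ∧
  ∀ x ∈ S, ∃ (g : EuclideanSpace ℝ (Fin n) → ℝ) (u : Set (EuclideanSpace ℝ (Fin n))),
    IsOpen u ∧ x ∈ u ∧ ContDiff ℝ (⊤ : ℕ∞) g ∧ (∀ y ∈ u, fderiv ℝ g y ≠ 0) ∧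
    S ∩ u = {y ∈ u | g y = 0}

/-!
Fix `c > 1`. Near a boundary point the boundary is `{g = 0}`, and some unit vector `ν` satisfies
`‖∇g‖ ≤ c ∂_ν g` there. If `‖U‖ ≤ 1`, Cauchy–Schwarz gives `⟨∇g, U + c ν⟩ ≥ 0`, so for a weight
`η ≥ 0` supported near the point, integrating by parts against a smoothed indicator of `{g > 0}`
yields `∫_{g > 0} div (η U) ≤ -c ∫_{g > 0} ∂_ν η`. On each line in direction `ν` the function `g` is
strictly increasing, so by Fubini the right-hand side is `c` times the integral of `η` over the
projection of the hypersurface to `ν^⊥`. Projections are `1`-Lipschitz and do not increase Hausdorff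
measure, hence it is at most `c ∫_{g = 0} η dμH^{n-1}`. A partition of unity on the support of `U`
adds these local bounds up, and `c → 1` concludes.

Near a boundary point `E` may also fill both sides of its boundary or neither; the flux of `η U`
then vanishes.
-/

section Hausdorff

variable {X Y : Type*} [EMetricSpace X] [MeasurableSpace X] [BorelSpace X]
  [EMetricSpace Y] [MeasurableSpace Y] [BorelSpace Y]

lemma restrict_image_hausdorffMeasure_le_map {f : X → Y} (hf : LipschitzWith 1 f)
    {d : ℝ} (hd : 0 ≤ d) (s : Set X) :
    μH[d].restrict (f '' s) ≤ (μH[d].restrict s).map f := by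
  have hfm : Measurable f := hf.continuous.measurable
  refine Measure.le_iff.2 fun C hC => ?_
  rw [Measure.restrict_apply hC, Measure.map_apply hfm hC, Measure.restrict_apply (hfm hC),
    Set.inter_comm C, Set.inter_comm _ s, ← Set.image_inter_preimage]
  simpa using hf.hausdorffMeasure_image_le hd (s ∩ f ⁻¹' C)

lemma setLIntegral_image_hausdorffMeasure_le {f : X → Y} (hf : LipschitzWith 1 f)
    {d : ℝ} (hd : 0 ≤ d) (s : Set X) (φ : Y → ℝ≥0∞) :
    ∫⁻ y in f '' s, φ y ∂μH[d] ≤ ∫⁻ x in s, φ (f x) ∂μH[d] :=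
  (lintegral_mono' (restrict_image_hausdorffMeasure_le_map hf hd s) le_rfl).trans
    (lintegral_map_le φ f)

end Hausdorff

lemma ofReal_integral_le_lintegral_ofReal {α : Type*} [MeasurableSpace α] {μ : Measure α}
    (f : α → ℝ) : ENNReal.ofReal (∫ x, f x ∂μ) ≤ ∫⁻ x, ENNReal.ofReal (f x) ∂μ := by
  by_cases hf : Integrable f μ
  · rw [integral_eq_lintegral_pos_part_sub_lintegral_neg_part hf]
    exact (ENNReal.ofReal_le_ofReal (sub_le_self _ ENNReal.toReal_nonneg)).trans
      ENNReal.ofReal_toReal_le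
  · simp [integral_undef hf]

section InnerProductSpace

variable {V : Type*} [NormedAddCommGroup V] [InnerProductSpace ℝ V]

lemma exists_orthogonalProjectionOnto_add_smul_eq (ν x : V) :
    ∃ t : ℝ, (ℝ ∙ ν)ᗮ.orthogonalProjectionOnto x + t • ν = x := by
  obtain ⟨t, ht⟩ := Submodule.mem_span_singleton.1 ((ℝ ∙ ν).starProjection_apply_mem x)
  exact ⟨t, by simp [ht]⟩

lemma finrank_orthogonal_span_singleton_add_one [FiniteDimensional ℝ V] {ν : V} (hν : ν ≠ 0) :
    Module.finrank ℝ (ℝ ∙ ν)ᗮ + 1 = Module.finrank ℝ V := by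
  rw [← (ℝ ∙ ν).finrank_add_finrank_orthogonal, finrank_span_singleton hν, add_comm]

variable [FiniteDimensional ℝ V] [MeasurableSpace V] [BorelSpace V]

lemma volume_le_hausdorffMeasure_finrank :
    (volume : Measure V) ≤ μH[Module.finrank ℝ V] := by
  let b := stdOrthonormalBasis ℝ V
  let φ : V → Fin (Module.finrank ℝ V) → ℝ := fun x => WithLp.ofLp (b.repr x)
  have hφ : MeasurePreserving φ :=
    (PiLp.volume_preserving_ofLp (Fin (Module.finrank ℝ V))).comp b.measurePreserving_repr
  have hφe : MeasurableEmbedding φ :=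
    (MeasurableEquiv.toLp 2 _).symm.measurableEmbedding.comp
      b.repr.toHomeomorph.measurableEmbedding
  have hφL : LipschitzWith 1 φ := by
    have := (PiLp.lipschitzWith_ofLp 2 fun _ => ℝ).comp b.repr.lipschitz
    rwa [one_mul] at this
  refine Measure.le_iff.2 fun s _ => ?_
  calc volume s = volume (φ '' s) := by
        rw [← hφ.measure_preimage_emb hφe, hφe.injective.preimage_image]
    _ = μH[Module.finrank ℝ V] (φ '' s) := by
        rw [← hausdorffMeasure_pi_real, Fintype.card_fin]
    _ ≤ μH[Module.finrank ℝ V] s := by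
        simpa using hφL.hausdorffMeasure_image_le (Nat.cast_nonneg (Module.finrank ℝ V)) s

lemma integral_eq_integral_orthogonal_integral_line {F : Type*} [NormedAddCommGroup F]
    [NormedSpace ℝ F] {ν : V} (hν : ‖ν‖ = 1) {f : V → F} (hf : Integrable f) :
    ∫ x, f x = ∫ y : (ℝ ∙ ν)ᗮ, ∫ t : ℝ, f (y + t • ν) := by
  let e := (Submodule.measurableEquivProd (ℝ ∙ ν) (0 : V)).symm
  have he : MeasurePreserving e := by
    simpa only [InnerProductSpace.euclideanHausdorffMeasure_eq_volume] using
      ((ℝ ∙ ν).measurePreserving_measurableEquivProd (0 : V)).symm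
  let ℓ := LinearIsometryEquiv.toSpanUnitSingleton (𝕜 := ℝ) ν hν
  rw [← he.integral_comp' f, Measure.volume_eq_prod,
    integral_prod_symm (fun p => f (e p)) (he.integrable_comp_of_integrable hf)]
  congr! 2 with y
  rw [← ℓ.measurePreserving.integral_comp ℓ.toHomeomorph.measurableEmbedding]
  congr! 2
  simp [e, ℓ, add_comm]

end InnerProductSpace

lemma subset_or_disjoint_of_disjoint_frontier {X : Type*} [TopologicalSpace X] {C E : Set X}
    (hC : IsPreconnected C) (h : Disjoint C (frontier E)) : C ⊆ E ∨ Disjoint C E := by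
  have hcover : C ⊆ interior E ∪ (closure E)ᶜ := fun z hz =>
    or_iff_not_imp_left.2 fun hint hcl => h.notMem_of_mem_left hz ⟨hcl, hint⟩
  have hdisj : Disjoint (interior E) (closure E)ᶜ :=
    Set.disjoint_compl_right_iff_subset.2 interior_subset_closure
  exact (hC.subset_or_subset isOpen_interior isClosed_closure.isOpen_compl hdisj hcover).imp
    (fun hint => hint.trans interior_subset)
    fun hext => Set.disjoint_left.2 fun z hz hzE => hext hz (subset_closure hzE)

section Lines

lemma setIntegral_pos_deriv_eq_neg {f G : ℝ → ℝ} {T : Set ℝ} (hf : ContDiff ℝ 1 f)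
    (hfc : HasCompactSupport f) (hfT : tsupport f ⊆ T) (hG : Continuous G)
    (hGT : StrictMonoOn G T) {τ : ℝ} (hτ : τ ∈ T) (hGτ : G τ = 0) :
    ∫ t in {t | 0 < G t}, deriv f t = -f τ := by
  rw [← hfc.integral_Ioi_deriv_eq hf τ, ← integral_indicator measurableSet_Ioi,
    ← integral_indicator (isOpen_lt continuous_const hG).measurableSet]
  congr 1 with t
  by_cases ht : t ∈ T
  · have hpos : 0 < G t ↔ τ < t := by rw [← hGτ, hGT.lt_iff_lt hτ ht]
    simp [Set.indicator, hpos]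
  · have hd : deriv f t = 0 := deriv_of_notMem_tsupport fun h => ht (hfT h)
    simp [Set.indicator, hd]

lemma integral_deriv_eq_zero {f : ℝ → ℝ} (hf : ContDiff ℝ 1 f) (hfc : HasCompactSupport f) :
    ∫ t, deriv f t = 0 :=
  integral_eq_zero_of_hasDerivAt_of_integrable
    (fun t => (hf.differentiable one_ne_zero t).hasDerivAt)
    ((hf.continuous_deriv le_rfl).integrable_of_hasCompactSupport hfc.deriv)
    (hf.continuous.integrable_of_hasCompactSupport hfc)

lemma setIntegral_deriv_eq_zero_of_disjoint_frontier {f : ℝ → ℝ} {P T : Set ℝ}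
    (hf : ContDiff ℝ 1 f) (hfc : HasCompactSupport f) (hfT : tsupport f ⊆ T)
    (hT : IsPreconnected T) (hTP : Disjoint T (frontier P)) :
    ∫ t in P, deriv f t = 0 := by
  have hd : ∀ t ∉ T, deriv f t = 0 := fun t ht => deriv_of_notMem_tsupport fun h => ht (hfT h)
  rcases subset_or_disjoint_of_disjoint_frontier hT hTP with hsub | hdisj
  · rw [setIntegral_eq_integral_of_forall_compl_eq_zero fun t ht => hd t fun h => ht (hsub h),
      integral_deriv_eq_zero hf hfc]
  · exact setIntegral_eq_zero_of_forall_eq_zero fun t ht =>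
      hd t fun h => hdisj.notMem_of_mem_left h ht

variable {V : Type*} [NormedAddCommGroup V] [NormedSpace ℝ V] {η g : V → ℝ} {W : Set V}

lemma isClosedEmbedding_add_smul (y : V) {ν : V} (hν : ν ≠ 0) :
    Topology.IsClosedEmbedding fun t : ℝ => y + t • ν :=
  (Homeomorph.addLeft y).isClosedEmbedding.comp (isClosedEmbedding_smul_left hν)

lemma deriv_comp_add_smul (hη : Differentiable ℝ η) (y ν : V) (t : ℝ) :
    deriv (fun t : ℝ => η (y + t • ν)) t = fderiv ℝ η (y + t • ν) ν := by
  have hline : HasDerivAt (fun t : ℝ => y + t • ν) ν t := by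
    simpa using ((hasDerivAt_id t).smul_const ν).const_add y
  exact ((hη _).hasFDerivAt.comp_hasDerivAt t hline).deriv

variable {y ν : V}

lemma tsupport_comp_add_smul_subset (hηW : tsupport η ⊆ W) :
    tsupport (fun t : ℝ => η (y + t • ν)) ⊆ {t | y + t • ν ∈ W} :=
  (tsupport_comp_subset_preimage η (by fun_prop)).trans (Set.preimage_mono hηW)

lemma setIntegral_pos_fderiv_line_eq_neg (hν : ν ≠ 0) (hη : ContDiff ℝ 1 η)
    (hηc : HasCompactSupport η) (hηW : tsupport η ⊆ W) (hg : Continuous g)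
    (hmono : StrictMonoOn (fun t : ℝ => g (y + t • ν)) {t | y + t • ν ∈ W})
    {τ : ℝ} (hτ : y + τ • ν ∈ W) (hgτ : g (y + τ • ν) = 0) :
    ∫ t in {t : ℝ | 0 < g (y + t • ν)}, fderiv ℝ η (y + t • ν) ν = -η (y + τ • ν) := by
  simp_rw [← deriv_comp_add_smul (hη.differentiable one_ne_zero)]
  exact setIntegral_pos_deriv_eq_neg (f := fun t => η (y + t • ν)) (by fun_prop)
    (hηc.comp_isClosedEmbedding (isClosedEmbedding_add_smul y hν))
    (tsupport_comp_add_smul_subset hηW) (by fun_prop) hmono hτ hgτ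

lemma setIntegral_pos_fderiv_line_eq_zero (hν : ν ≠ 0) (hη : ContDiff ℝ 1 η)
    (hηc : HasCompactSupport η) (hηW : tsupport η ⊆ W) (hW : Convex ℝ W) (hg : Continuous g)
    (hg0 : ∀ t : ℝ, y + t • ν ∈ W → g (y + t • ν) ≠ 0) :
    ∫ t in {t : ℝ | 0 < g (y + t • ν)}, fderiv ℝ η (y + t • ν) ν = 0 := by
  simp_rw [← deriv_comp_add_smul (hη.differentiable one_ne_zero)]
  refine setIntegral_deriv_eq_zero_of_disjoint_frontier (by fun_prop)
    (hηc.comp_isClosedEmbedding (isClosedEmbedding_add_smul y hν))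
    (tsupport_comp_add_smul_subset hηW) ?_ ?_
  · exact ((hW.translate_preimage_right y).linear_preimage
      (LinearMap.toSpanSingleton ℝ V ν)).isPreconnected
  · refine Set.disjoint_left.2 fun t ht htf => hg0 t ht ?_
    exact (frontier_lt_subset_eq continuous_const (by fun_prop) htf).symm

end Lines

section Layer

variable {V : Type*} [NormedAddCommGroup V] [InnerProductSpace ℝ V] [FiniteDimensional ℝ V]
  [MeasurableSpace V] [BorelSpace V] {η g : V → ℝ} {W : Set V} {ν : V}

lemma integral_pos_fderiv_eq_integral_orthogonal (hν : ‖ν‖ = 1) (hη : ContDiff ℝ 1 η)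
    (hηc : HasCompactSupport η) (hg : Continuous g) :
    ∫ x in {x | 0 < g x}, fderiv ℝ η x ν =
      ∫ y : (ℝ ∙ ν)ᗮ, ∫ t in {t : ℝ | 0 < g (y + t • ν)}, fderiv ℝ η (y + t • ν) ν := by
  have hpos : MeasurableSet {x | 0 < g x} := (isOpen_lt continuous_const hg).measurableSet
  have hint : Integrable fun x => fderiv ℝ η x ν :=
    ((hη.continuous_fderiv one_ne_zero).clm_apply continuous_const).integrable_of_hasCompactSupport
      (hηc.fderiv_apply ℝ ν)
  rw [← integral_indicator hpos,
    integral_eq_integral_orthogonal_integral_line hν (hint.indicator hpos)]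
  congr! 2 with y
  rw [← integral_indicator (isOpen_lt continuous_const (by fun_prop)).measurableSet]
  rfl

lemma ofReal_neg_setIntegral_pos_fderiv_le (hν : ‖ν‖ = 1) (hη : ContDiff ℝ 1 η)
    (hηc : HasCompactSupport η) (hηW : tsupport η ⊆ W) (hW : Convex ℝ W) (hWo : IsOpen W)
    (hg : Continuous g)
    (hmono : ∀ y, StrictMonoOn (fun t : ℝ => g (y + t • ν)) {t | y + t • ν ∈ W}) :
    ENNReal.ofReal (-∫ x in {x | 0 < g x}, fderiv ℝ η x ν) ≤
      ∫⁻ x in W ∩ {x | g x = 0}, ENNReal.ofReal (η x) ∂μH[(Module.finrank ℝ V : ℝ) - 1] := by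
  have hν0 : ν ≠ 0 := norm_ne_zero_iff.1 (hν ▸ one_ne_zero)
  let S : Set V := W ∩ {x | g x = 0}
  let proj : V → (ℝ ∙ ν)ᗮ := (ℝ ∙ ν)ᗮ.orthogonalProjectionOnto
  let k : (ℝ ∙ ν)ᗮ → ℝ := fun y =>
    -∫ t in {t : ℝ | 0 < g (y + t • ν)}, fderiv ℝ η (y + t • ν) ν
  have hk : ∀ x ∈ S, k (proj x) = η x := by
    rintro x ⟨hxW, hgx⟩
    obtain ⟨t, ht⟩ := exists_orthogonalProjectionOnto_add_smul_eq ν x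
    rw [← ht] at hxW hgx
    simp only [k]
    rw [setIntegral_pos_fderiv_line_eq_neg hν0 hη hηc hηW hg (hmono _) hxW hgx, neg_neg, ht]
  have hk0 : ∀ y ∉ proj '' S, k y = 0 := fun y hy => by
    refine neg_eq_zero.2 (setIntegral_pos_fderiv_line_eq_zero hν0 hη hηc hηW hW hg
      fun t ht hgt => hy ⟨_, ⟨ht, hgt⟩, by simp [proj]⟩)
  have hS : MeasurableSet S :=
    hWo.measurableSet.inter (isClosed_eq hg continuous_const).measurableSet
  have hdim : (Module.finrank ℝ V : ℝ) - 1 = Module.finrank ℝ (ℝ ∙ ν)ᗮ := by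
    rw [← finrank_orthogonal_span_singleton_add_one hν0]; push_cast; ring
  calc ENNReal.ofReal (-∫ x in {x | 0 < g x}, fderiv ℝ η x ν)
      = ENNReal.ofReal (∫ y, k y) := by
        rw [integral_pos_fderiv_eq_integral_orthogonal hν hη hηc hg, integral_neg]
    _ ≤ ∫⁻ y, ENNReal.ofReal (k y) := ofReal_integral_le_lintegral_ofReal k
    _ ≤ ∫⁻ y, ENNReal.ofReal (k y) ∂μH[Module.finrank ℝ (ℝ ∙ ν)ᗮ] :=
        lintegral_mono' volume_le_hausdorffMeasure_finrank le_rfl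
    _ = ∫⁻ y in proj '' S, ENNReal.ofReal (k y) ∂μH[Module.finrank ℝ (ℝ ∙ ν)ᗮ] :=
        (setLIntegral_eq_of_support_subset fun y hy => by_contra fun hyS => hy (by
          simp [hk0 y hyS])).symm
    _ ≤ ∫⁻ x in S, ENNReal.ofReal (k (proj x)) ∂μH[Module.finrank ℝ (ℝ ∙ ν)ᗮ] :=
        setLIntegral_image_hausdorffMeasure_le
          (ℝ ∙ ν)ᗮ.lipschitzWith_orthogonalProjectionOnto (Nat.cast_nonneg _) S _
    _ = ∫⁻ x in S, ENNReal.ofReal (η x) ∂μH[(Module.finrank ℝ V : ℝ) - 1] := by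
        rw [hdim]
        exact setLIntegral_congr_fun hS fun x hx => by rw [hk x hx]

end Layer

section Divergence

lemma integral_fderiv_apply_eq_zero {V F : Type*} [NormedAddCommGroup V] [NormedSpace ℝ V]
    [FiniteDimensional ℝ V] [MeasurableSpace V] [BorelSpace V] [NormedAddCommGroup F]
    [NormedSpace ℝ F] {μ : Measure V} [μ.IsAddHaarMeasure] {f : V → F} (hf : ContDiff ℝ 1 f)
    (hfc : HasCompactSupport f) (v : V) : ∫ x, fderiv ℝ f x v ∂μ = 0 := by
  have hf' : Integrable (fun x => fderiv ℝ f x v) μ :=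
    ((hf.continuous_fderiv one_ne_zero).clm_apply continuous_const).integrable_of_hasCompactSupport
      (hfc.fderiv_apply ℝ v)
  simpa using integral_smul_fderiv_eq_neg_fderiv_smul_of_integrable (μ := μ) (v := v)
    (f := fun _ : V => (1 : ℝ)) (g := f) (by simp) (by simpa using hf')
    (by simpa using hf.continuous.integrable_of_hasCompactSupport hfc)
    (fun _ _ => differentiableAt_const _) (fun x _ => hf.differentiable one_ne_zero x)

variable {n : ℕ} {F : EuclideanSpace ℝ (Fin n) → ℝ}
  {U : EuclideanSpace ℝ (Fin n) → EuclideanSpace ℝ (Fin n)} {x : EuclideanSpace ℝ (Fin n)}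

lemma vecDiv_of_notMem_tsupport (hx : x ∉ tsupport U) : vecDiv U x = 0 := by
  simp [vecDiv, fderiv_of_notMem_tsupport ℝ hx]

lemma hasCompactSupport_vecDiv (hU : HasCompactSupport U) : HasCompactSupport (vecDiv U) :=
  HasCompactSupport.intro hU.isCompact fun _ hx => vecDiv_of_notMem_tsupport hx

lemma continuous_vecDiv (hU : ContDiff ℝ 1 U) : Continuous (vecDiv U) :=
  continuous_finsetSum _ fun _ _ =>
    ((hU.continuous_fderiv one_ne_zero).clm_apply continuous_const).inner continuous_const

lemma integrable_vecDiv (hU : ContDiff ℝ 1 U) (hUc : HasCompactSupport U) :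
    Integrable (vecDiv U) :=
  (continuous_vecDiv hU).integrable_of_hasCompactSupport (hasCompactSupport_vecDiv hUc)

lemma vecDiv_add_const (v : EuclideanSpace ℝ (Fin n)) :
    vecDiv (fun x => U x + v) x = vecDiv U x := by
  simp [vecDiv]

lemma vecDiv_sum {ι : Type*} (s : Finset ι)
    {U : ι → EuclideanSpace ℝ (Fin n) → EuclideanSpace ℝ (Fin n)}
    (hU : ∀ i ∈ s, DifferentiableAt ℝ (U i) x) :
    vecDiv (fun x => ∑ i ∈ s, U i x) x = ∑ i ∈ s, vecDiv (U i) x := by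
  simp only [vecDiv]
  rw [Finset.sum_comm, fderiv_fun_sum hU]
  simp [sum_inner]

lemma vecDiv_smul (hF : DifferentiableAt ℝ F x) (hU : DifferentiableAt ℝ U x) :
    vecDiv (fun x => F x • U x) x = F x * vecDiv U x + fderiv ℝ F x (U x) := by
  have hgrad : fderiv ℝ F x (U x) = ∑ i, U x i * fderiv ℝ F x (EuclideanSpace.single i 1) := by
    conv_lhs => rw [← (EuclideanSpace.basisFun (Fin n) ℝ).sum_repr (U x)]
    simp
  simp only [vecDiv, hgrad, Finset.mul_sum, ← Finset.sum_add_distrib, fderiv_fun_smul hF hU]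
  refine Finset.sum_congr rfl fun i _ => ?_
  simp [inner_add_left, inner_smul_left, EuclideanSpace.inner_single_right, mul_comm]

lemma integral_vecDiv_eq_zero (hU : ContDiff ℝ 1 U) (hUc : HasCompactSupport U) :
    ∫ x, vecDiv U x = 0 := by
  have hint (v : EuclideanSpace ℝ (Fin n)) : Integrable fun x => fderiv ℝ U x v :=
    ((hU.continuous_fderiv one_ne_zero).clm_apply continuous_const).integrable_of_hasCompactSupport
      (hUc.fderiv_apply ℝ v)
  simp only [vecDiv]
  rw [integral_finsetSum _ fun i _ => (hint _).inner_const _]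
  refine Finset.sum_eq_zero fun i _ => ?_
  simp_rw [real_inner_comm]
  rw [integral_inner (hint _), integral_fderiv_apply_eq_zero hU hUc, inner_zero_right]

lemma integral_mul_vecDiv_eq_neg (hF : ContDiff ℝ 1 F) (hU : ContDiff ℝ 1 U)
    (hUc : HasCompactSupport U) :
    ∫ x, F x * vecDiv U x = -∫ x, fderiv ℝ F x (U x) := by
  have hdiv : Integrable fun x => F x * vecDiv U x :=
    (hF.continuous.mul (continuous_vecDiv hU)).integrable_of_hasCompactSupport
      (HasCompactSupport.mul_left (f := F) (hasCompactSupport_vecDiv hUc))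
  have hgrad : Integrable fun x => fderiv ℝ F x (U x) := by
    refine ((hF.continuous_fderiv one_ne_zero).clm_apply
      hU.continuous).integrable_of_hasCompactSupport
      (HasCompactSupport.intro hUc.isCompact fun x hx => ?_)
    rw [image_eq_zero_of_notMem_tsupport hx, map_zero]
  have hprod (x : EuclideanSpace ℝ (Fin n)) :
      F x * vecDiv U x + fderiv ℝ F x (U x) = vecDiv (fun x => F x • U x) x :=
    (vecDiv_smul (hF.differentiable one_ne_zero x) (hU.differentiable one_ne_zero x)).symm
  rw [← add_eq_zero_iff_eq_neg, ← integral_add hdiv hgrad, funext hprod]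
  exact integral_vecDiv_eq_zero (hF.smul hU) (HasCompactSupport.smul_left (f := F) hUc)

lemma integral_comp_mul_vecDiv_nonpos {g : EuclideanSpace ℝ (Fin n) → ℝ} {φ : ℝ → ℝ}
    (hφ : ContDiff ℝ 1 φ) (hφm : Monotone φ) (hg : ContDiff ℝ 1 g) (hU : ContDiff ℝ 1 U)
    (hUc : HasCompactSupport U) (hgU : ∀ x, 0 ≤ fderiv ℝ g x (U x)) :
    ∫ x, φ (g x) * vecDiv U x ≤ 0 := by
  rw [integral_mul_vecDiv_eq_neg (F := fun x => φ (g x)) (hφ.comp hg) hU hUc, neg_nonpos]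
  refine integral_nonneg fun x => ?_
  have hchain := ((hφ.differentiable one_ne_zero (g x)).hasDerivAt.comp_hasFDerivAt x
    (hg.differentiable one_ne_zero x).hasFDerivAt).fderiv
  rw [Function.comp_def] at hchain
  simpa [hchain] using mul_nonneg hφm.deriv_nonneg (hgU x)

lemma tendsto_integral_smoothTransition_mul {α : Type*} [MeasurableSpace α] {μ : Measure α}
    {g D : α → ℝ} (hg : Measurable g) (hD : Integrable D μ) :
    Filter.Tendsto (fun k : ℕ => ∫ x, Real.smoothTransition (k * g x) * D x ∂μ) Filter.atTop
      (nhds (∫ x in {x | 0 < g x}, D x ∂μ)) := by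
  rw [← integral_indicator (measurableSet_lt measurable_const hg)]
  refine tendsto_integral_of_dominated_convergence (fun x => ‖D x‖) (fun k => ?_) hD.norm
    (fun k => ae_of_all _ fun x => ?_) (ae_of_all _ fun x => ?_)
  · exact (Real.smoothTransition.continuous.measurable.comp
      (hg.const_mul _)).aestronglyMeasurable.mul hD.aestronglyMeasurable
  · rw [norm_mul, Real.norm_of_nonneg (Real.smoothTransition.nonneg _)]
    exact mul_le_of_le_one_left (norm_nonneg _) (Real.smoothTransition.le_one _)
  · by_cases hpos : 0 < g x
    · obtain ⟨N, hN⟩ := exists_nat_ge (g x)⁻¹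
      rw [Set.indicator_of_mem (by exact hpos)]
      refine tendsto_const_nhds.congr' ?_
      filter_upwards [Filter.eventually_ge_atTop N] with k hk
      rw [Real.smoothTransition.one_of_one_le, one_mul]
      exact (inv_le_iff_one_le_mul₀ hpos).1 (hN.trans (Nat.cast_le.2 hk))
    · rw [Set.indicator_of_notMem (by exact hpos)]
      refine tendsto_const_nhds.congr fun k => ?_
      rw [Real.smoothTransition.zero_of_nonpos, zero_mul]
      exact mul_nonpos_of_nonneg_of_nonpos k.cast_nonneg (not_lt.1 hpos)

lemma setIntegral_pos_vecDiv_nonpos {g : EuclideanSpace ℝ (Fin n) → ℝ}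
    (hg : ContDiff ℝ 1 g) (hU : ContDiff ℝ 1 U) (hUc : HasCompactSupport U)
    (hgU : ∀ x, 0 ≤ fderiv ℝ g x (U x)) : ∫ x in {x | 0 < g x}, vecDiv U x ≤ 0 :=
  le_of_tendsto'
    (tendsto_integral_smoothTransition_mul hg.continuous.measurable (integrable_vecDiv hU hUc))
    fun k => integral_comp_mul_vecDiv_nonpos (φ := fun t => Real.smoothTransition (k * t))
      (Real.smoothTransition.contDiff.comp (contDiff_const.mul contDiff_id))
      (Real.smoothTransition.monotone.comp (monotone_mul_left_of_nonneg k.cast_nonneg))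
      hg hU hUc hgU

end Divergence

section Transversal

variable {V : Type*} [NormedAddCommGroup V] [NormedSpace ℝ V]

lemma strictMonoOn_comp_add_smul {g : V → ℝ} {W : Set V} {ν : V} (hg : Differentiable ℝ g)
    (hW : Convex ℝ W) (hν : ∀ x ∈ W, 0 < fderiv ℝ g x ν) (y : V) :
    StrictMonoOn (fun t : ℝ => g (y + t • ν)) {t | y + t • ν ∈ W} := by
  refine strictMonoOn_of_deriv_pos ?_ (hg.continuous.comp (by fun_prop)).continuousOn
    fun t ht => ?_
  · exact (hW.translate_preimage_right y).linear_preimage (LinearMap.toSpanSingleton ℝ V ν)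
  · rw [deriv_comp_add_smul hg]
    exact hν _ (interior_subset ht :)

end Transversal

section NormalDirection

variable {V : Type*} [NormedAddCommGroup V] [InnerProductSpace ℝ V] [CompleteSpace V]

lemma exists_norm_eq_one_apply_eq_norm {A : StrongDual ℝ V} (hA : A ≠ 0) :
    ∃ ν : V, ‖ν‖ = 1 ∧ A ν = ‖A‖ := by
  set v := (InnerProductSpace.toDual ℝ V).symm A
  have hv : ‖v‖ = ‖A‖ := LinearIsometryEquiv.norm_map _ _
  have hAv : A v = ‖A‖ * ‖A‖ := by
    rw [← InnerProductSpace.toDual_symm_apply, real_inner_self_eq_norm_mul_norm, hv]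
  have hA0 : ‖A‖ ≠ 0 := norm_ne_zero_iff.2 hA
  refine ⟨‖A‖⁻¹ • v, ?_, ?_⟩
  · rw [norm_smul, norm_inv, norm_norm, hv, inv_mul_cancel₀ hA0]
  · rw [map_smul, hAv, smul_eq_mul, inv_mul_cancel_left₀ hA0]

lemma exists_eventually_norm_fderiv_lt_mul {g : V → ℝ} {x₀ : V} {c : ℝ} (hg : ContDiff ℝ 1 g)
    (hg' : fderiv ℝ g x₀ ≠ 0) (hc : 1 < c) :
    ∃ ν : V, ‖ν‖ = 1 ∧ ∀ᶠ x in nhds x₀, ‖fderiv ℝ g x‖ < c * fderiv ℝ g x ν := by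
  obtain ⟨ν, hν, hνg⟩ := exists_norm_eq_one_apply_eq_norm hg'
  have hcont := hg.continuous_fderiv one_ne_zero
  refine ⟨ν, hν, hcont.norm.continuousAt.eventually_lt
    (continuous_const.mul (hcont.clm_apply continuous_const)).continuousAt ?_⟩
  rw [hνg]
  exact lt_mul_of_one_lt_left (norm_pos_iff.2 hg') hc

end NormalDirection

section Sides

variable {V : Type*} [NormedAddCommGroup V] [NormedSpace ℝ V] [CompleteSpace V]
  {g : V → ℝ} {g' : StrongDual ℝ V} {x₀ : V}

lemma exists_isPreconnected_mem_nhdsWithin_pos (hg : HasStrictFDerivAt g g' x₀) (hg' : g' ≠ 0)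
    {N : Set V} (hN : N ∈ nhds x₀) :
    ∃ C ⊆ N ∩ {x | 0 < g x}, IsPreconnected C ∧ C ∈ nhdsWithin x₀ {x | 0 < g x} := by
  have hrange : (g' : V →ₗ[ℝ] ℝ).range = ⊤ :=
    LinearMap.range_eq_top.2 (LinearMap.surjective fun h => hg' (ContinuousLinearMap.coe_inj.1 h))
  set e := hg.implicitToOpenPartialHomeomorph g g' hrange
  have hsource : x₀ ∈ e.source := hg.mem_implicitToOpenPartialHomeomorph_source hrange
  have hfst (x : V) : (e x).1 = g x := hg.implicitToOpenPartialHomeomorph_fst hrange x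
  obtain ⟨ε, hε, hεN⟩ : ∃ ε > 0, Metric.ball (e x₀) ε ⊆ e.target ∩ e.symm ⁻¹' N :=
    Metric.mem_nhds_iff.1 (Filter.inter_mem (e.open_target.mem_nhds (e.map_source hsource))
      ((e.continuousAt_symm (e.map_source hsource)).preimage_mem_nhds
        (by rwa [e.left_inv hsource])))
  refine ⟨e.symm '' (Metric.ball (e x₀) ε ∩ {p | 0 < p.1}), ?_, ?_, ?_⟩
  · rintro _ ⟨p, ⟨hp, hp0⟩, rfl⟩
    refine ⟨(hεN hp).2, ?_⟩
    rw [Set.mem_ofPred_eq, ← hfst, e.right_inv (hεN hp).1]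
    exact hp0
  · refine IsPreconnected.image ?_ _ (e.continuousOn_symm.mono fun p hp => (hεN hp.1).1)
    exact ((convex_ball _ _).inter
      (convex_halfSpace_gt (LinearMap.fst ℝ ℝ _).isLinear 0)).isPreconnected
  · filter_upwards [mem_nhdsWithin_of_mem_nhds (e.open_source.mem_nhds hsource),
      mem_nhdsWithin_of_mem_nhds ((e.continuousAt hsource).preimage_mem_nhds
        (Metric.ball_mem_nhds _ hε)), self_mem_nhdsWithin] with x hxs hxε hx
    exact ⟨e x, ⟨hxε, hx.trans_eq (hfst x).symm⟩, e.left_inv hxs⟩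

lemma eventually_pos_imp_mem_or_notMem (hg : HasStrictFDerivAt g g' x₀) (hg' : g' ≠ 0)
    {E : Set V} (hE : ∀ᶠ x in nhds x₀, x ∈ frontier E → g x = 0) :
    (∀ᶠ x in nhds x₀, 0 < g x → x ∈ E) ∨ ∀ᶠ x in nhds x₀, 0 < g x → x ∉ E := by
  obtain ⟨C, hCE, hC, hCx₀⟩ := exists_isPreconnected_mem_nhdsWithin_pos hg hg' hE
  have hdisj : Disjoint C (frontier E) :=
    Set.disjoint_left.2 fun x hx hxE => (hCE hx).2.ne' ((hCE hx).1 hxE)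
  refine (subset_or_disjoint_of_disjoint_frontier hC hdisj).imp (fun h => ?_) fun h => ?_
  · exact eventually_nhdsWithin_iff.1 (Filter.mem_of_superset hCx₀ h)
  · exact eventually_nhdsWithin_iff.1
      (Filter.mem_of_superset hCx₀ fun x hx => Set.disjoint_left.1 h hx)

end Sides

section OneSided

variable {n : ℕ} {g η : EuclideanSpace ℝ (Fin n) → ℝ}
  {U : EuclideanSpace ℝ (Fin n) → EuclideanSpace ℝ (Fin n)}
  {W : Set (EuclideanSpace ℝ (Fin n))} {ν : EuclideanSpace ℝ (Fin n)} {c : ℝ}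

lemma setIntegral_pos_vecDiv_smul_le (hη : ContDiff ℝ 1 η) (hη0 : ∀ x, 0 ≤ η x)
    (hηc : HasCompactSupport η) (hηW : tsupport η ⊆ W) (hU : ContDiff ℝ 1 U)
    (hU1 : ∀ x, ‖U x‖ ≤ 1) (hg : ContDiff ℝ 1 g)
    (hgν : ∀ x ∈ W, ‖fderiv ℝ g x‖ ≤ c * fderiv ℝ g x ν) :
    ∫ x in {x | 0 < g x}, vecDiv (fun x => η x • U x) x ≤
      c * -∫ x in {x | 0 < g x}, fderiv ℝ η x ν := by
  have hUν : ContDiff ℝ 1 fun x => U x + c • ν := hU.add contDiff_const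
  -- `η (U + c ν)` points into `{g > 0}`, so `U` flows out at most `c` times as much as `-ν` does.
  have hflux (x : EuclideanSpace ℝ (Fin n)) : 0 ≤ fderiv ℝ g x (η x • (U x + c • ν)) := by
    by_cases hx : x ∈ tsupport η
    · have hgU : -‖fderiv ℝ g x‖ ≤ fderiv ℝ g x (U x) :=
        neg_le_of_abs_le ((fderiv ℝ g x).unit_le_opNorm _ (hU1 x))
      rw [map_smul, map_add, map_smul, smul_eq_mul, smul_eq_mul]
      exact mul_nonneg (hη0 x) (by linarith [hgν x (hηW hx)])
    · rw [image_eq_zero_of_notMem_tsupport hx, zero_smul, map_zero]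
  have hdiv (x : EuclideanSpace ℝ (Fin n)) : vecDiv (fun x => η x • (U x + c • ν)) x =
      vecDiv (fun x => η x • U x) x + c * fderiv ℝ η x ν := by
    have hηx := hη.differentiable one_ne_zero x
    rw [vecDiv_smul hηx (hUν.differentiable one_ne_zero x), vecDiv_add_const, map_add, map_smul,
      smul_eq_mul, vecDiv_smul hηx (hU.differentiable one_ne_zero x), add_assoc]
  have hη' : Integrable fun x => fderiv ℝ η x ν :=
    ((hη.continuous_fderiv one_ne_zero).clm_apply continuous_const).integrable_of_hasCompactSupport
      (hηc.fderiv_apply ℝ ν)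
  have hηU : Integrable (vecDiv fun x => η x • U x) :=
    integrable_vecDiv (hη.smul hU) hηc.smul_right
  have hle : ∫ x in {x | 0 < g x}, vecDiv (fun x => η x • (U x + c • ν)) x ≤ 0 :=
    setIntegral_pos_vecDiv_nonpos hg (hη.smul hUν) hηc.smul_right hflux
  simp only [hdiv] at hle
  rw [integral_add hηU.integrableOn (hη'.const_mul c).integrableOn, integral_const_mul] at hle
  linarith

lemma ofReal_setIntegral_pos_vecDiv_smul_le (hη : ContDiff ℝ 1 η) (hη0 : ∀ x, 0 ≤ η x)
    (hηc : HasCompactSupport η) (hηW : tsupport η ⊆ W) (hU : ContDiff ℝ 1 U)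
    (hU1 : ∀ x, ‖U x‖ ≤ 1) (hW : Convex ℝ W) (hWo : IsOpen W) (hg : ContDiff ℝ 1 g)
    (hν : ‖ν‖ = 1) (hc : 0 ≤ c) (hgν : ∀ x ∈ W, ‖fderiv ℝ g x‖ < c * fderiv ℝ g x ν) :
    ENNReal.ofReal (∫ x in {x | 0 < g x}, vecDiv (fun x => η x • U x) x) ≤
      ENNReal.ofReal c *
        ∫⁻ x in W ∩ {x | g x = 0}, ENNReal.ofReal (η x) ∂μH[(n : ℝ) - 1] := by
  have hpos (x) (hx : x ∈ W) : 0 < fderiv ℝ g x ν :=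
    pos_of_mul_pos_right ((norm_nonneg _).trans_lt (hgν x hx)) hc
  calc ENNReal.ofReal (∫ x in {x | 0 < g x}, vecDiv (fun x => η x • U x) x)
      ≤ ENNReal.ofReal (c * -∫ x in {x | 0 < g x}, fderiv ℝ η x ν) :=
        ENNReal.ofReal_le_ofReal (setIntegral_pos_vecDiv_smul_le hη hη0 hηc hηW hU hU1 hg
          fun x hx => (hgν x hx).le)
    _ = ENNReal.ofReal c * ENNReal.ofReal (-∫ x in {x | 0 < g x}, fderiv ℝ η x ν) :=
        ENNReal.ofReal_mul hc
    _ ≤ ENNReal.ofReal c *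
          ∫⁻ x in W ∩ {x | g x = 0}, ENNReal.ofReal (η x) ∂μH[(n : ℝ) - 1] := by
        gcongr
        simpa using ofReal_neg_setIntegral_pos_fderiv_le hν hη hηc hηW hW hWo hg.continuous
          (strictMonoOn_comp_add_smul (hg.differentiable one_ne_zero) hW hpos)

end OneSided

/-- A `C¹` hypersurface of `ℝⁿ`: near each of its points, `S` is the zero set of a `C¹` function
whose derivative does not vanish at that point. This is the regularity of the boundary under which
the flux is estimated. Only the germ of `g` at the point matters, so `g` is taken globally `C¹`. -/
def IsC1Hypersurface {n : ℕ} (S : Set (EuclideanSpace ℝ (Fin n))) : Prop :=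
  ∀ x ∈ S, ∃ g : EuclideanSpace ℝ (Fin n) → ℝ,
    ContDiff ℝ 1 g ∧ fderiv ℝ g x ≠ 0 ∧ ∀ᶠ y in nhds x, y ∈ S ↔ g y = 0

lemma IsSmoothCompactHypersurface.isC1Hypersurface {n : ℕ} {S : Set (EuclideanSpace ℝ (Fin n))}
    (hS : IsSmoothCompactHypersurface S) : IsC1Hypersurface S := by
  intro x hx
  obtain ⟨g, u, hu, hxu, hg, hg', hSu⟩ := hS.2 x hx
  refine ⟨g, hg.of_le (mod_cast le_top), hg' x hxu, ?_⟩
  filter_upwards [hu.mem_nhds hxu] with y hy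
  simpa [hy] using Set.ext_iff.1 hSu y

/-- The flux bound `∫_E div (η U) ≤ c ∫_{∂E} η dμH^{n-1}` for all nonnegative `C¹` weights `η`
supported near `x₀` and all `C¹` fields `U` with `‖U‖ ≤ 1`. The weight makes these bounds
summable along a partition of unity. -/
def HasLocalFluxBound {n : ℕ} (E : Set (EuclideanSpace ℝ (Fin n))) (c : ℝ)
    (x₀ : EuclideanSpace ℝ (Fin n)) : Prop :=
  ∃ O ∈ nhds x₀, ∀ (η : EuclideanSpace ℝ (Fin n) → ℝ)
    (U : EuclideanSpace ℝ (Fin n) → EuclideanSpace ℝ (Fin n)),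
    ContDiff ℝ 1 η → (∀ x, 0 ≤ η x) → HasCompactSupport η → tsupport η ⊆ O →
    ContDiff ℝ 1 U → (∀ x, ‖U x‖ ≤ 1) →
    ENNReal.ofReal (∫ x in E, vecDiv (fun x => η x • U x) x) ≤
      ENNReal.ofReal c * ∫⁻ x in frontier E, ENNReal.ofReal (η x) ∂μH[(n : ℝ) - 1]

section Null

lemma volume_eq_zero_of_hausdorffMeasure_ne_top {V : Type*} [NormedAddCommGroup V]
    [InnerProductSpace ℝ V] [FiniteDimensional ℝ V] [MeasurableSpace V] [BorelSpace V]
    {S : Set V} {d : ℝ} (hd : d < Module.finrank ℝ V) (hS : μH[d] S ≠ ∞) : volume S = 0 :=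
  le_zero_iff.1 ((volume_le_hausdorffMeasure_finrank S).trans_eq
    ((Measure.hausdorffMeasure_zero_or_top hd S).resolve_right hS))

lemma setIntegral_congr_set_of_ne_zero {X F : Type*} [MeasurableSpace X] {μ : Measure X}
    [NormedAddCommGroup F] [NormedSpace ℝ F] {f : X → F} {s t : Set X}
    (hs : NullMeasurableSet s μ) (ht : NullMeasurableSet t μ)
    (h : ∀ᵐ x ∂μ, f x ≠ 0 → (x ∈ s ↔ x ∈ t)) : ∫ x in s, f x ∂μ = ∫ x in t, f x ∂μ := by
  rw [← integral_indicator₀ hs, ← integral_indicator₀ ht]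
  refine integral_congr_ae (h.mono fun x hx => ?_)
  by_cases hf : f x = 0
  · rw [Set.indicator_apply_eq_zero.2 fun _ => hf, Set.indicator_apply_eq_zero.2 fun _ => hf]
  · by_cases hxs : x ∈ s
    · rw [Set.indicator_of_mem hxs, Set.indicator_of_mem ((hx hf).1 hxs)]
    · rw [Set.indicator_of_notMem hxs, Set.indicator_of_notMem (mt (hx hf).2 hxs)]

end Null

section LocalFlux

variable {n : ℕ} {E : Set (EuclideanSpace ℝ (Fin n))} {x₀ : EuclideanSpace ℝ (Fin n)} {c : ℝ}

lemma setIntegral_vecDiv_congr_set {s O : Set (EuclideanSpace ℝ (Fin n))}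
    {U : EuclideanSpace ℝ (Fin n) → EuclideanSpace ℝ (Fin n)} (hE : volume (frontier E) = 0)
    (hs : MeasurableSet s) (hUO : tsupport U ⊆ O)
    (hEs : ∀ x ∈ O, x ∉ frontier E → (x ∈ E ↔ x ∈ s)) :
    ∫ x in E, vecDiv U x = ∫ x in s, vecDiv U x := by
  refine setIntegral_congr_set_of_ne_zero (nullMeasurableSet_of_null_frontier hE)
    hs.nullMeasurableSet ?_
  filter_upwards [measure_eq_zero_iff_ae_notMem.1 hE] with x hxE hxU
  exact hEs x (hUO (not_imp_comm.1 vecDiv_of_notMem_tsupport hxU)) hxE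

lemma hasLocalFluxBound_of_eventually_mem (hE : volume (frontier E) = 0)
    (h : ∀ᶠ x in nhds x₀, x ∉ frontier E → x ∈ E) : HasLocalFluxBound E c x₀ := by
  refine ⟨_, h, fun η U hη _ hηc hηO hU _ => ?_⟩
  have hzero : ∫ x in E, vecDiv (fun x => η x • U x) x = 0 := by
    rw [setIntegral_vecDiv_congr_set hE .univ ((tsupport_smul_subset_left η U).trans hηO)
      fun x hx hxE => iff_of_true (hx hxE) trivial, setIntegral_univ]
    exact integral_vecDiv_eq_zero (hη.smul hU) hηc.smul_right
  simp [hzero]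

lemma hasLocalFluxBound_of_eventually_notMem (hE : volume (frontier E) = 0)
    (h : ∀ᶠ x in nhds x₀, x ∉ frontier E → x ∉ E) : HasLocalFluxBound E c x₀ := by
  refine ⟨_, h, fun η U _ _ _ hηO _ _ => ?_⟩
  have hzero : ∫ x in E, vecDiv (fun x => η x • U x) x = 0 := by
    rw [setIntegral_vecDiv_congr_set hE .empty ((tsupport_smul_subset_left η U).trans hηO)
      fun x hx hxE => iff_of_false (hx hxE) (Set.notMem_empty x), setIntegral_empty]
  simp [hzero]

lemma hasLocalFluxBound_of_eventually_mem_iff_pos {g : EuclideanSpace ℝ (Fin n) → ℝ}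
    (hE : volume (frontier E) = 0) (hc : 1 < c) (hg : ContDiff ℝ 1 g) (hg' : fderiv ℝ g x₀ ≠ 0)
    (hgE : ∀ᶠ x in nhds x₀, g x = 0 → x ∈ frontier E)
    (h : ∀ᶠ x in nhds x₀, x ∉ frontier E → (x ∈ E ↔ 0 < g x)) : HasLocalFluxBound E c x₀ := by
  obtain ⟨ν, hν, hgν⟩ := exists_eventually_norm_fderiv_lt_mul hg hg' hc
  obtain ⟨r, hr, hball⟩ := Metric.eventually_nhds_iff_ball.1 (hgν.and (hgE.and h))
  refine ⟨_, Metric.ball_mem_nhds x₀ hr, fun η U hη hη0 hηc hηO hU hU1 => ?_⟩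
  rw [setIntegral_vecDiv_congr_set hE (measurableSet_lt measurable_const hg.continuous.measurable)
    ((tsupport_smul_subset_left η U).trans hηO) fun x hx => (hball x hx).2.2]
  calc ENNReal.ofReal (∫ x in {x | 0 < g x}, vecDiv (fun x => η x • U x) x)
      ≤ ENNReal.ofReal c *
          ∫⁻ x in Metric.ball x₀ r ∩ {x | g x = 0}, ENNReal.ofReal (η x) ∂μH[(n : ℝ) - 1] :=
        ofReal_setIntegral_pos_vecDiv_smul_le hη hη0 hηc hηO hU hU1 (convex_ball x₀ r)
          Metric.isOpen_ball hg hν (zero_le_one.trans hc.le) fun x hx => (hball x hx).1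
    _ ≤ ENNReal.ofReal c * ∫⁻ x in frontier E, ENNReal.ofReal (η x) ∂μH[(n : ℝ) - 1] := by
        gcongr
        exact fun x hx => (hball x hx.1).2.1 hx.2

lemma hasLocalFluxBound_of_mem_frontier (hE : volume (frontier E) = 0) (hc : 1 < c)
    (hS : IsC1Hypersurface (frontier E)) (hx₀ : x₀ ∈ frontier E) : HasLocalFluxBound E c x₀ := by
  obtain ⟨g, hg, hg', hgE⟩ := hS x₀ hx₀
  have hstrict : HasStrictFDerivAt g (fderiv ℝ g x₀) x₀ :=
    hg.contDiffAt.hasStrictFDerivAt one_ne_zero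
  have hneg' : fderiv ℝ (fun x => -g x) x₀ ≠ 0 := by simpa [fderiv_fun_neg] using hg'
  have hp := eventually_pos_imp_mem_or_notMem hstrict hg' (hgE.mono fun x hx => hx.1)
  have hn : (∀ᶠ x in nhds x₀, g x < 0 → x ∈ E) ∨ ∀ᶠ x in nhds x₀, g x < 0 → x ∉ E := by
    simpa only [Pi.neg_apply, neg_pos] using eventually_pos_imp_mem_or_notMem hstrict.neg
      (neg_ne_zero.2 hg') (hgE.mono fun x hx h => by simpa using hx.1 h)
  have hside : ∀ᶠ x in nhds x₀, x ∉ frontier E → g x < 0 ∨ 0 < g x :=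
    hgE.mono fun x hx hxE => lt_or_gt_of_ne (mt hx.2 hxE)
  rcases hp with hp | hp <;> rcases hn with hn | hn
  · refine hasLocalFluxBound_of_eventually_mem hE ?_
    filter_upwards [hside, hp, hn] with x hx hpx hnx hxE
    exact (hx hxE).elim hnx hpx
  · refine hasLocalFluxBound_of_eventually_mem_iff_pos hE hc hg hg' (hgE.mono fun x hx => hx.2) ?_
    filter_upwards [hside, hp, hn] with x hx hpx hnx hxE
    exact ⟨fun hxE' => (hx hxE).resolve_left fun h => hnx h hxE', hpx⟩
  · refine hasLocalFluxBound_of_eventually_mem_iff_pos hE hc hg.neg hneg'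
      (hgE.mono fun x hx h => hx.2 (neg_eq_zero.1 h)) ?_
    filter_upwards [hside, hp, hn] with x hx hpx hnx hxE
    exact ⟨fun hxE' => neg_pos.2 ((hx hxE).resolve_right fun h => hpx h hxE'),
      fun h => hnx (neg_pos.1 h)⟩
  · refine hasLocalFluxBound_of_eventually_notMem hE ?_
    filter_upwards [hside, hp, hn] with x hx hpx hnx hxE
    exact (hx hxE).elim hnx hpx

lemma IsC1Hypersurface.hasLocalFluxBound (hS : IsC1Hypersurface (frontier E))
    (hE : volume (frontier E) = 0) (hc : 1 < c) (x₀ : EuclideanSpace ℝ (Fin n)) :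
    HasLocalFluxBound E c x₀ := by
  by_cases hx₀ : x₀ ∈ frontier E
  · exact hasLocalFluxBound_of_mem_frontier hE hc hS hx₀
  by_cases hxE : x₀ ∈ E
  · have hnhds : E ∈ nhds x₀ :=
      mem_interior_iff_mem_nhds.1 (self_sdiff_frontier E ▸ ⟨hxE, hx₀⟩)
    exact hasLocalFluxBound_of_eventually_mem hE (Filter.mem_of_superset hnhds fun _ hx _ => hx)
  · have hnhds : Eᶜ ∈ nhds x₀ :=
      mem_interior_iff_mem_nhds.1 (self_sdiff_frontier Eᶜ ▸ ⟨hxE, frontier_compl E ▸ hx₀⟩)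
    exact hasLocalFluxBound_of_eventually_notMem hE (Filter.mem_of_superset hnhds fun _ hx _ => hx)

end LocalFlux

section Global

lemma exists_contDiff_partitionOfUnity {V : Type*} [NormedAddCommGroup V] [NormedSpace ℝ V]
    [FiniteDimensional ℝ V] {K : Set V} (hK : IsCompact K) {O : V → Set V}
    (hO : ∀ x ∈ K, O x ∈ nhds x) :
    ∃ (t : Finset V) (f : t → V → ℝ), (∀ i, ContDiff ℝ 1 (f i)) ∧ (∀ i x, 0 ≤ f i x) ∧
      (∀ i, HasCompactSupport (f i)) ∧ (∀ i, tsupport (f i) ⊆ O i) ∧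
      (∀ x, ∑ i, f i x ≤ 1) ∧ ∀ x ∈ K, ∑ i, f i x = 1 := by
  obtain ⟨t, -, ht⟩ := hK.elim_nhds_subcover (fun x => interior (O x) ∩ Metric.ball x 1)
    fun x hx => Filter.inter_mem (interior_mem_nhds.2 (hO x hx)) (Metric.ball_mem_nhds x one_pos)
  obtain ⟨f, hf⟩ := SmoothPartitionOfUnity.exists_isSubordinate (modelWithCornersSelf ℝ V)
    hK.isClosed (fun i : t => interior (O i) ∩ Metric.ball (i : V) 1)
    (fun i => isOpen_interior.inter Metric.isOpen_ball) (by rwa [Set.iUnion_subtype])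
  refine ⟨t, fun i => f i, fun i => (f i).contMDiff.contDiff.of_le (mod_cast le_top), f.nonneg,
    fun i => ?_, fun i => (hf i).trans (Set.inter_subset_left.trans interior_subset),
    fun x => ?_, fun x hx => ?_⟩
  · exact Metric.isCompact_of_isClosed_isBounded (isClosed_tsupport _)
      (Metric.isBounded_ball.subset ((hf i).trans Set.inter_subset_right))
  · rw [← finsum_eq_sum_of_fintype]
    exact f.sum_le_one x
  · rw [← finsum_eq_sum_of_fintype]
    exact f.sum_eq_one hx

variable {n : ℕ} {E : Set (EuclideanSpace ℝ (Fin n))} {c : ℝ}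
  {U : EuclideanSpace ℝ (Fin n) → EuclideanSpace ℝ (Fin n)}

lemma ofReal_setIntegral_vecDiv_le_mul_of_hasLocalFluxBound (hE : ∀ x, HasLocalFluxBound E c x)
    (hU : ContDiff ℝ 1 U) (hUc : HasCompactSupport U) (hU1 : ∀ x, ‖U x‖ ≤ 1) :
    ENNReal.ofReal (∫ x in E, vecDiv U x) ≤
      ENNReal.ofReal c * μH[(n : ℝ) - 1] (frontier E) := by
  choose O hO hflux using hE
  obtain ⟨t, f, hf, hf0, hfc, hfO, hf_le, hf_eq⟩ :=
    exists_contDiff_partitionOfUnity hUc.isCompact fun x _ => hO x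
  have hsum (x) : ∑ i, f i x • U x = U x := by
    by_cases hx : x ∈ tsupport U
    · rw [← Finset.sum_smul, hf_eq x hx, one_smul]
    · simp [image_eq_zero_of_notMem_tsupport hx]
  have hdiv (x) : vecDiv U x = ∑ i, vecDiv (fun x => f i x • U x) x := by
    have h := vecDiv_sum (U := fun i x => f i x • U x) Finset.univ (x := x) fun i _ =>
      ((hf i).smul hU).differentiable one_ne_zero x
    rwa [funext hsum] at h
  have hint (i) : Integrable (vecDiv fun x => f i x • U x) :=
    integrable_vecDiv ((hf i).smul hU) (hfc i).smul_right
  calc ENNReal.ofReal (∫ x in E, vecDiv U x)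
      = ENNReal.ofReal (∑ i, ∫ x in E, vecDiv (fun x => f i x • U x) x) := by
        simp_rw [hdiv]
        rw [integral_finsetSum _ fun i _ => (hint i).integrableOn]
    _ ≤ ∑ i, ENNReal.ofReal (∫ x in E, vecDiv (fun x => f i x • U x) x) :=
        Finset.le_sum_of_subadditive _ ENNReal.ofReal_zero.le
          (fun _ _ => ENNReal.ofReal_add_le) _ _
    _ ≤ ∑ i, ENNReal.ofReal c * ∫⁻ x in frontier E, ENNReal.ofReal (f i x) ∂μH[(n : ℝ) - 1] :=
        Finset.sum_le_sum fun i _ => hflux i (f i) U (hf i) (hf0 i) (hfc i) (hfO i) hU hU1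
    _ = ENNReal.ofReal c *
          ∫⁻ x in frontier E, ENNReal.ofReal (∑ i, f i x) ∂μH[(n : ℝ) - 1] := by
        simp_rw [ENNReal.ofReal_sum_of_nonneg fun i _ => hf0 i _]
        rw [lintegral_finsetSum _ fun i _ => (hf i).continuous.measurable.ennreal_ofReal,
          Finset.mul_sum]
    _ ≤ ENNReal.ofReal c * ∫⁻ _ in frontier E, 1 ∂μH[(n : ℝ) - 1] := by
        gcongr with x
        exact ENNReal.ofReal_le_one.2 (hf_le x)
    _ = ENNReal.ofReal c * μH[(n : ℝ) - 1] (frontier E) := by rw [setLIntegral_one]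

lemma IsC1Hypersurface.ofReal_setIntegral_vecDiv_le (hS : IsC1Hypersurface (frontier E))
    (hE : μH[(n : ℝ) - 1] (frontier E) ≠ ∞) (hU : ContDiff ℝ 1 U) (hUc : HasCompactSupport U)
    (hU1 : ∀ x, ‖U x‖ ≤ 1) :
    ENNReal.ofReal (∫ x in E, vecDiv U x) ≤ μH[(n : ℝ) - 1] (frontier E) := by
  have hnull : volume (frontier E) = 0 :=
    volume_eq_zero_of_hausdorffMeasure_ne_top (by simp) hE
  have hlim : Filter.Tendsto
      (fun c : ℝ => ENNReal.ofReal c * μH[(n : ℝ) - 1] (frontier E))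
      (nhdsWithin 1 (Set.Ioi 1)) (nhds (μH[(n : ℝ) - 1] (frontier E))) := by
    have hcont := (ENNReal.continuous_mul_const hE).comp ENNReal.continuous_ofReal
    simpa [Function.comp_def] using (hcont.tendsto 1).mono_left nhdsWithin_le_nhds
  refine ge_of_tendsto hlim (eventually_nhdsWithin_of_forall fun c hc => ?_)
  exact ofReal_setIntegral_vecDiv_le_mul_of_hasLocalFluxBound
    (hS.hasLocalFluxBound hnull hc) hU hUc hU1

lemma totalVariation_indicator_le {a : ℝ≥0∞} (hE : NullMeasurableSet E)
    (h : ∀ U : EuclideanSpace ℝ (Fin n) → EuclideanSpace ℝ (Fin n),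
      ContDiff ℝ 1 U → HasCompactSupport U → (∀ x, ‖U x‖ ≤ 1) →
      ENNReal.ofReal (∫ x in E, vecDiv U x) ≤ a) :
    totalVariation (E.indicator fun _ => (1 : ℝ)) ≤ a := by
  refine iSup_le fun ⟨U, hU, hUc, hU1⟩ => ?_
  have hmul (x) : E.indicator (fun _ => (1 : ℝ)) x * vecDiv U x = E.indicator (vecDiv U) x := by
    by_cases hx : x ∈ E <;> simp [hx]
  simp_rw [hmul]
  rw [integral_indicator₀ hE]
  exact h U hU hUc hU1

end Global

theorem totalVariation_indicator_le_hausdorff_boundary_general {n : ℕ}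
    (E : Set (EuclideanSpace ℝ (Fin n))) (hbd : IsC1Hypersurface (frontier E)) :
    (∀ U : EuclideanSpace ℝ (Fin n) → EuclideanSpace ℝ (Fin n),
      ContDiff ℝ 1 U → HasCompactSupport U → (∀ x, ‖U x‖ ≤ 1) →
      ENNReal.ofReal (∫ x in E, vecDiv U x) ≤ μH[(n : ℝ) - 1] (frontier E)) ∧
    totalVariation (E.indicator fun _ => (1 : ℝ)) ≤ μH[(n : ℝ) - 1] (frontier E) := by
  by_cases htop : μH[(n : ℝ) - 1] (frontier E) = ∞
  · simp [htop]
  have hnull : volume (frontier E) = 0 :=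
    volume_eq_zero_of_hausdorffMeasure_ne_top (by simp) htop
  have hflux (U) (hU : ContDiff ℝ 1 U) (hUc : HasCompactSupport U) (hU1 : ∀ x, ‖U x‖ ≤ 1) :=
    hbd.ofReal_setIntegral_vecDiv_le htop hU hUc hU1
  exact ⟨hflux, totalVariation_indicator_le (nullMeasurableSet_of_null_frontier hnull) hflux⟩

/-- For every admissible test vector field `U`, `∫_E div U ≤ μH^{n−1}(∂E)`;
consequently `TV(χ_E) ≤ μH^{n−1}(∂E)`. -/
theorem totalVariation_indicator_le_hausdorff_boundary {n : ℕ} (hn : 2 ≤ n)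
    (E : Set (EuclideanSpace ℝ (Fin n)))
    (hE : IsCompact E) (hcl : E = closure (interior E))
    (hbd : IsSmoothCompactHypersurface (frontier E)) :
    (∀ U : EuclideanSpace ℝ (Fin n) → EuclideanSpace ℝ (Fin n),
      ContDiff ℝ 1 U → HasCompactSupport U → (∀ x, ‖U x‖ ≤ 1) →
      ENNReal.ofReal (∫ x in E, vecDiv U x) ≤ μH[(n : ℝ) - 1] (frontier E)) ∧
    totalVariation (E.indicator fun _ => (1 : ℝ)) ≤ μH[(n : ℝ) - 1] (frontier E) :=
  totalVariation_indicator_le_hausdorff_boundary_general E hbd.isC1Hypersurface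
end

section
/- Let X be a real inner product space, J : X → ℝ convex and absolutely one-homogeneous, and suppose u₀ ∈ X satisfies λ·u₀ ∈ ∂J(u₀) for some λ > 0. Then for every t > 0, the element u* = max(1 − t·λ, 0)·u₀ is a minimizer of E(u) = (1/(2t))·‖u − u₀‖² + J(u); i.e., the ROF problem applied to an eigenfunction merely rescales it, with extinction for t ≥ 1/λ. -/
/-- The subdifferential `∂J(u) = {p | J(v) − J(u) ≥ ⟨p, v − u⟩ ∀ v}` of a functional `J`
on a real inner product space. -/
def subdiff {X : Type*} [NormedAddCommGroup X] [InnerProductSpace ℝ X]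
    (J : X → ℝ) (u : X) : Set X :=
  {p | ∀ v, (inner ℝ p (v - u) : ℝ) ≤ J v - J u}

/-!
A point `u` minimizes the ROF energy with data `f` as soon as `(f - u) / t ∈ ∂J(u)`. For positively
homogeneous `J`, `p ∈ ∂J(u)` means that `⟨p, ·⟩ ≤ J` with equality at `u`, so a subgradient at `u₀`
remains one along the whole ray `c • u₀`, `c ≥ 0`. If `t * λ ≤ 1`, then `c = 1 - t * λ` makes
`(u₀ - c • u₀) / t` equal to `λ • u₀`. If `t * λ ≥ 1`, then `u₀ / t` is a multiple of `λ • u₀` by a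
factor in `[0, 1]`, hence a subgradient at `0` because `J ≥ 0`.
-/

section

variable {X : Type*} [NormedAddCommGroup X] [InnerProductSpace ℝ X] {J : X → ℝ} {u p : X}

/-- The Rudin–Osher–Fatemi energy with regularizer `J`, regularization parameter `t` and data `f`,
whose minimizers are the proximal points of `t * J` at `f`. -/
noncomputable def rofEnergy (J : X → ℝ) (t : ℝ) (f u : X) : ℝ :=
  1 / (2 * t) * ‖u - f‖ ^ 2 + J u

theorem isMinOn_rofEnergy_of_smul_sub_mem_subdiff {f : X} {t : ℝ} (ht : 0 < t)
    (h : t⁻¹ • (f - u) ∈ subdiff J u) : IsMinOn (rofEnergy J t f) Set.univ u := by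
  refine isMinOn_univ_iff.2 fun v ↦ ?_
  have subgradient : t⁻¹ * inner ℝ (f - u) (v - u) ≤ J v - J u := by
    simpa only [real_inner_smul_left] using h v
  have expand : ‖v - f‖ ^ 2 = ‖v - u‖ ^ 2 - 2 * inner ℝ (f - u) (v - u) + ‖u - f‖ ^ 2 := by
    rw [← sub_sub_sub_cancel_right v f u, norm_sub_sq_real, norm_sub_rev f u, real_inner_comm]
  have gap : rofEnergy J t f v - rofEnergy J t f u =
      1 / (2 * t) * ‖v - u‖ ^ 2 + (J v - J u - t⁻¹ * inner ℝ (f - u) (v - u)) := by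
    rw [rofEnergy, rofEnergy, expand]
    field_simp
    ring
  have : 0 ≤ 1 / (2 * t) * ‖v - u‖ ^ 2 := by positivity
  linarith

theorem mem_subdiff_iff_of_posHomogeneous (hhom : ∀ c : ℝ, 0 ≤ c → ∀ v, J (c • v) = c * J v) :
    p ∈ subdiff J u ↔ (∀ v, inner ℝ p v ≤ J v) ∧ inner ℝ p u = J u := by
  constructor
  · intro hp
    have along_ray (c : ℝ) (hc : 0 ≤ c) : c * inner ℝ p u - inner ℝ p u ≤ c * J u - J u := by
      simpa only [inner_sub_right, real_inner_smul_right, hhom c hc] using hp (c • u)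
    have euler : inner ℝ p u = J u := by
      linarith [along_ray 0 le_rfl, along_ray 2 zero_le_two]
    refine ⟨fun v ↦ ?_, euler⟩
    have := hp v
    rw [inner_sub_right] at this
    linarith
  · rintro ⟨hle, heq⟩ v
    rw [inner_sub_right, heq]
    exact sub_le_sub_right (hle v) _

theorem mem_subdiff_smul_of_posHomogeneous (hhom : ∀ c : ℝ, 0 ≤ c → ∀ v, J (c • v) = c * J v)
    (hp : p ∈ subdiff J u) {c : ℝ} (hc : 0 ≤ c) : p ∈ subdiff J (c • u) := by
  rw [mem_subdiff_iff_of_posHomogeneous hhom] at hp ⊢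
  exact ⟨hp.1, by rw [real_inner_smul_right, hp.2, hhom c hc]⟩

theorem smul_mem_subdiff_zero_of_posHomogeneous
    (hhom : ∀ c : ℝ, 0 ≤ c → ∀ v, J (c • v) = c * J v) (hJ : ∀ v, 0 ≤ J v)
    (hp : p ∈ subdiff J u) {s : ℝ} (hs₀ : 0 ≤ s) (hs₁ : s ≤ 1) : s • p ∈ subdiff J 0 := by
  have hle := ((mem_subdiff_iff_of_posHomogeneous hhom).1 hp).1
  have map_zero : J 0 = 0 := by simpa using hhom 0 le_rfl 0
  intro v
  calc inner ℝ (s • p) (v - 0) = s * inner ℝ p v := by rw [sub_zero, real_inner_smul_left]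
    _ ≤ s * J v := mul_le_mul_of_nonneg_left (hle v) hs₀
    _ ≤ J v := mul_le_of_le_one_left (hJ v) hs₁
    _ = J v - J 0 := by rw [map_zero, sub_zero]

theorem nonneg_of_absHomogeneous_of_mem_subdiff (hhom : ∀ c : ℝ, ∀ v, J (c • v) = |c| * J v)
    (hp : p ∈ subdiff J u) (v : X) : 0 ≤ J v := by
  have hle := ((mem_subdiff_iff_of_posHomogeneous
    fun c hc w ↦ by rw [hhom, abs_of_nonneg hc]).1 hp).1
  have even : J (-v) = J v := by simpa using hhom (-1) v
  have := hle (-v)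
  rw [inner_neg_right, even] at this
  linarith [hle v]

theorem rof_on_eigenfunction_rescales_general
    (hhom : ∀ c : ℝ, 0 ≤ c → ∀ v, J (c • v) = c * J v) (hJ : ∀ v, 0 ≤ J v)
    {u₀ : X} {lam : ℝ} (heig : lam • u₀ ∈ subdiff J u₀) {t : ℝ} (ht : 0 < t) :
    IsMinOn (rofEnergy J t u₀) Set.univ (max (1 - t * lam) 0 • u₀) := by
  apply isMinOn_rofEnergy_of_smul_sub_mem_subdiff ht
  rcases le_total (t * lam) 1 with hle | hge
  · have residual : t⁻¹ • (u₀ - (1 - t * lam) • u₀) = lam • u₀ := by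
      rw [sub_smul, one_smul, sub_sub_cancel, mul_smul, inv_smul_smul₀ ht.ne']
    rw [max_eq_left (sub_nonneg.2 hle), residual]
    exact mem_subdiff_smul_of_posHomogeneous hhom heig (sub_nonneg.2 hle)
  · have hlam : lam ≠ 0 := by
      rintro rfl
      linarith
    have residual : t⁻¹ • u₀ = (t * lam)⁻¹ • lam • u₀ := by
      rw [mul_inv, mul_smul, inv_smul_smul₀ hlam]
    rw [max_eq_right (sub_nonpos.2 hge), zero_smul, sub_zero, residual]
    exact smul_mem_subdiff_zero_of_posHomogeneous hhom hJ heig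
      (inv_nonneg.2 (zero_le_one.trans hge)) (inv_le_one_of_one_le₀ hge)

end

/-- If `J` is convex and absolutely one-homogeneous and `u₀` is a
generalized eigenfunction of `∂J` with eigenvalue `λ > 0`, then for every `t > 0` the
element `u* = max(1 − t·λ, 0)·u₀` minimizes `E(u) = (1/(2t))·‖u − u₀‖² + J(u)`. -/
theorem rof_on_eigenfunction_rescales {X : Type*} [NormedAddCommGroup X]
    [InnerProductSpace ℝ X]
    (J : X → ℝ) (hconv : ConvexOn ℝ Set.univ J)
    (hhom : ∀ c : ℝ, ∀ u : X, J (c • u) = |c| * J u)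
    (u₀ : X) (lam : ℝ) (hlam : 0 < lam) (heig : lam • u₀ ∈ subdiff J u₀)
    (t : ℝ) (ht : 0 < t) :
    ∀ u : X,
      (1 / (2 * t)) * ‖(max (1 - t * lam) 0) • u₀ - u₀‖ ^ 2 + J ((max (1 - t * lam) 0) • u₀)
        ≤ (1 / (2 * t)) * ‖u - u₀‖ ^ 2 + J u :=
  isMinOn_univ_iff.1 <| rof_on_eigenfunction_rescales_general
    (fun c hc u ↦ by rw [hhom, abs_of_nonneg hc])
    (nonneg_of_absHomogeneous_of_mem_subdiff hhom heig) heig ht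
end

section
/- Let X be a real inner product space, J : X → ℝ convex and absolutely one-homogeneous, λ > 0, and u₀ ∈ X with λ·u₀ ∈ ∂J(u₀). Define u : [0,∞) → X by u(t) = max(1 − λ·t, 0)·u₀. Then u(0) = u₀; for every t ∈ (0, 1/λ), u is differentiable at t with derivative u'(t) = −λ·u₀ and −u'(t) = λ·u₀ ∈ ∂J(u(t)); and for every t > 1/λ, u(t) = 0, u is differentiable at t with u'(t) = 0, and 0 ∈ ∂J(u(t)). Hence u solves the gradient-flow inclusion u'(t) ∈ −∂J(u(t)) for all t ∈ (0,∞) except t = 1/λ, and u(t) = 0 for all t ≥ 1/λ. -/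
/-!
A positively one-homogeneous functional has the same subdifferential at `u` and at `c • u` for every
`c > 0`, so the eigenvector inclusion at `u₀` persists along the ray through `u₀`, and a solution
moving on this ray loses the constant multiple `lam • u₀` per unit of time until it reaches the
origin. Taking `v = 0` and `v = 2 • u` in the subgradient inequality gives Euler's identity
`⟪p, u⟫ = J u`, hence `⟪p, v⟫ ≤ J v` for all `v`. If `J` is even, this bound at `v` and `-v` shows
`0 ≤ J v`: the origin minimizes `J`, so the flow stays there.
-/

section Derivative

theorem hasDerivAt_max_of_lt {f g : ℝ → ℝ} {f' t : ℝ} (hf : HasDerivAt f f' t)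
    (hg : ContinuousAt g t) (hlt : g t < f t) :
    HasDerivAt (fun s ↦ max (f s) (g s)) f' t :=
  hf.congr_of_eventuallyEq <|
    (hg.eventually_lt hf.continuousAt hlt).mono fun _ hs ↦ max_eq_left hs.le

variable {E : Type*} [NormedAddCommGroup E] [NormedSpace ℝ E] {lam t : ℝ}

theorem hasDerivAt_max_one_sub_mul_smul_of_mul_lt_one (x : E) (ht : lam * t < 1) :
    HasDerivAt (fun s ↦ max (1 - lam * s) 0 • x) (-(lam • x)) t := by
  have hlin : HasDerivAt (fun s ↦ 1 - lam * s) (-lam) t := (hasDerivAt_const_mul lam).const_sub 1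
  simpa only [neg_smul] using
    (hasDerivAt_max_of_lt hlin continuousAt_const (sub_pos.mpr ht)).smul_const x

theorem hasDerivAt_max_one_sub_mul_smul_of_one_lt_mul (x : E) (ht : 1 < lam * t) :
    HasDerivAt (fun s ↦ max (1 - lam * s) 0 • x) 0 t := by
  have hcont : ContinuousAt (fun s ↦ 1 - lam * s) t := by fun_prop
  simpa only [max_comm, zero_smul] using
    (hasDerivAt_max_of_lt (hasDerivAt_const t 0) hcont (sub_neg.mpr ht)).smul_const x

end Derivative

section Subdifferential

variable {X : Type*} [NormedAddCommGroup X] [InnerProductSpace ℝ X] {J : X → ℝ} {p u : X}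

theorem zero_mem_subdiff_iff : (0 : X) ∈ subdiff J u ↔ ∀ v, J u ≤ J v := by
  simp only [subdiff, Set.mem_ofPred_eq, inner_zero_left, sub_nonneg]

theorem map_zero_of_posHomogeneous (hhom : ∀ c : ℝ, 0 < c → ∀ v : X, J (c • v) = c * J v) :
    J 0 = 0 := by
  have h : J 0 = 2 * J 0 := by simpa only [smul_zero] using hhom 2 two_pos 0
  linarith

theorem subdiff_smul (hhom : ∀ c : ℝ, 0 < c → ∀ v : X, J (c • v) = c * J v)
    {c : ℝ} (hc : 0 < c) (u : X) : subdiff J (c • u) = subdiff J u := by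
  ext p
  simp only [subdiff, Set.mem_ofPred_eq]
  rw [(MulAction.surjective₀ hc.ne').forall]
  simp only [hhom c hc, ← smul_sub, ← mul_sub, real_inner_smul_right, mul_le_mul_iff_right₀ hc]

theorem inner_self_eq_of_mem_subdiff (hhom : ∀ c : ℝ, 0 < c → ∀ v : X, J (c • v) = c * J v)
    (hp : p ∈ subdiff J u) : inner ℝ p u = J u := by
  have h_zero : -inner ℝ p u ≤ -J u := by
    simpa only [zero_sub, inner_neg_right, map_zero_of_posHomogeneous hhom] using hp 0
  have h_two : inner ℝ p u ≤ 2 * J u - J u := by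
    simpa only [two_smul, add_sub_cancel_right, ← hhom 2 two_pos u] using hp ((2 : ℝ) • u)
  linarith

theorem inner_le_of_mem_subdiff (hhom : ∀ c : ℝ, 0 < c → ∀ v : X, J (c • v) = c * J v)
    (hp : p ∈ subdiff J u) (v : X) : inner ℝ p v ≤ J v := by
  have h := hp v
  rwa [inner_sub_right, inner_self_eq_of_mem_subdiff hhom hp, sub_le_sub_iff_right] at h

theorem nonneg_of_even_of_mem_subdiff (hhom : ∀ c : ℝ, 0 < c → ∀ v : X, J (c • v) = c * J v)
    (heven : Function.Even J) (hp : p ∈ subdiff J u) (v : X) : 0 ≤ J v := by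
  have h_pos : inner ℝ p v ≤ J v := inner_le_of_mem_subdiff hhom hp v
  have h_neg : -inner ℝ p v ≤ J v := by
    simpa only [inner_neg_right, heven v] using inner_le_of_mem_subdiff hhom hp (-v)
  linarith

end Subdifferential

theorem tv_flow_on_eigenfunction_general {X : Type*} [NormedAddCommGroup X]
    [InnerProductSpace ℝ X]
    (J : X → ℝ) (hhom : ∀ c : ℝ, 0 < c → ∀ v : X, J (c • v) = c * J v)
    (hnonneg : ∀ v, 0 ≤ J v)
    (u₀ : X) (lam : ℝ) (hlam : 0 < lam) (heig : lam • u₀ ∈ subdiff J u₀)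
    (u : ℝ → X) (hu : ∀ t : ℝ, u t = max (1 - lam * t) 0 • u₀) :
    u 0 = u₀ ∧
    (∀ t ∈ Set.Ioo (0 : ℝ) (1 / lam),
      HasDerivAt u (-(lam • u₀)) t ∧ lam • u₀ ∈ subdiff J (u t)) ∧
    (∀ t : ℝ, 1 / lam < t →
      u t = 0 ∧ HasDerivAt u 0 t ∧ (0 : X) ∈ subdiff J (u t)) ∧
    (∀ t : ℝ, 0 < t → t ≠ 1 / lam →
      ∃ d : X, HasDerivAt u d t ∧ -d ∈ subdiff J (u t)) ∧
    (∀ t : ℝ, 1 / lam ≤ t → u t = 0) := by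
  obtain rfl : u = fun s ↦ max (1 - lam * s) 0 • u₀ := funext hu
  have hextinct : ∀ t, 1 / lam ≤ t → max (1 - lam * t) 0 • u₀ = 0 := fun t ht ↦ by
    rw [max_eq_right (sub_nonpos.mpr ((div_le_iff₀' hlam).mp ht)), zero_smul]
  have hdecay : ∀ t < 1 / lam, HasDerivAt (fun s ↦ max (1 - lam * s) 0 • u₀) (-(lam • u₀)) t ∧
      lam • u₀ ∈ subdiff J (max (1 - lam * t) 0 • u₀) := fun t ht ↦ by
    have hlt : lam * t < 1 := (lt_div_iff₀' hlam).mp ht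
    refine ⟨hasDerivAt_max_one_sub_mul_smul_of_mul_lt_one u₀ hlt, ?_⟩
    rw [subdiff_smul hhom (lt_max_of_lt_left (sub_pos.mpr hlt))]
    exact heig
  have hrest : ∀ t, 1 / lam < t → HasDerivAt (fun s ↦ max (1 - lam * s) 0 • u₀) 0 t ∧
      (0 : X) ∈ subdiff J (max (1 - lam * t) 0 • u₀) := fun t ht ↦ by
    refine ⟨hasDerivAt_max_one_sub_mul_smul_of_one_lt_mul u₀ ((div_lt_iff₀' hlam).mp ht), ?_⟩
    rw [hextinct t ht.le, zero_mem_subdiff_iff, map_zero_of_posHomogeneous hhom]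
    exact hnonneg
  refine ⟨by simp, fun t ht ↦ hdecay t ht.2, fun t ht ↦ ⟨hextinct t ht.le, hrest t ht⟩,
    fun t _ hne ↦ ?_, hextinct⟩
  rcases hne.lt_or_gt with ht | ht
  · exact ⟨_, (hdecay t ht).1, by simpa only [neg_neg] using (hdecay t ht).2⟩
  · exact ⟨0, (hrest t ht).1, by simpa only [neg_zero] using (hrest t ht).2⟩

/-- Analytic solution of the gradient flow `u'(t) ∈ −∂J(u(t))` on a
generalized eigenfunction `u₀` (with `λ·u₀ ∈ ∂J(u₀)`, `λ > 0`) of a convex, absolutely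
one-homogeneous functional `J`: the function `u(t) = max(1 − λ·t, 0)·u₀` satisfies
`u(0) = u₀`; on `(0, 1/λ)` it is differentiable with `u'(t) = −λ·u₀` and
`−u'(t) = λ·u₀ ∈ ∂J(u(t))`; for `t > 1/λ` it vanishes, has derivative `0`, and
`0 ∈ ∂J(u(t))`; hence it solves the flow inclusion for all `t > 0` except `t = 1/λ`,
and `u(t) = 0` for all `t ≥ 1/λ`. -/
theorem tv_flow_on_eigenfunction {X : Type*} [NormedAddCommGroup X]
    [InnerProductSpace ℝ X]
    (J : X → ℝ) (hconv : ConvexOn ℝ Set.univ J)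
    (hhom : ∀ c : ℝ, ∀ v : X, J (c • v) = |c| * J v)
    (u₀ : X) (lam : ℝ) (hlam : 0 < lam) (heig : lam • u₀ ∈ subdiff J u₀)
    (u : ℝ → X) (hu : ∀ t : ℝ, u t = max (1 - lam * t) 0 • u₀) :
    u 0 = u₀ ∧
    (∀ t ∈ Set.Ioo (0 : ℝ) (1 / lam),
      HasDerivAt u (-(lam • u₀)) t ∧ lam • u₀ ∈ subdiff J (u t)) ∧
    (∀ t : ℝ, 1 / lam < t →
      u t = 0 ∧ HasDerivAt u 0 t ∧ (0 : X) ∈ subdiff J (u t)) ∧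
    (∀ t : ℝ, 0 < t → t ≠ 1 / lam →
      ∃ d : X, HasDerivAt u d t ∧ -d ∈ subdiff J (u t)) ∧
    (∀ t : ℝ, 1 / lam ≤ t → u t = 0) := by
  have hpos : ∀ c : ℝ, 0 < c → ∀ v, J (c • v) = c * J v := fun c hc v ↦ by
    rw [hhom, abs_of_pos hc]
  have heven : Function.Even J := fun v ↦ by simpa using hhom (-1) v
  exact tv_flow_on_eigenfunction_general J hpos (nonneg_of_even_of_mem_subdiff hpos heven heig)
    u₀ lam hlam heig u hu
end

section
/- Let X be a real inner product space, J : X → ℝ convex, u₀ ∈ X, t > 0, and k ∈ X a vector such that J(u + c·k) = J(u) for all u ∈ X and all c ∈ ℝ. If u* minimizes E(u) = (1/2)·‖u − u₀‖² + t·J(u) over X, then ⟨u*, k⟩ = ⟨u₀, k⟩. -/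
/-!
The term `t * J` is constant along the line through `ustar` in direction `k`, so `ustar` is a point
of that line nearest to `u₀`; the residual `ustar - u₀` is therefore orthogonal to `k`.
-/

section Orthogonality

variable {𝕜 E : Type*} [RCLike 𝕜] [SeminormedAddCommGroup E] [InnerProductSpace 𝕜 E]

theorem norm_add_ofReal_mul_inner_smul_sq (x y : E) (s : ℝ) :
    ‖x + ((s : 𝕜) * inner 𝕜 y x) • y‖ ^ 2 =
      ‖x‖ ^ 2 + 2 * s * ‖inner 𝕜 x y‖ ^ 2 + s ^ 2 * ‖inner 𝕜 x y‖ ^ 2 * ‖y‖ ^ 2 := by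
  have re_inner : RCLike.re (inner 𝕜 x (((s : 𝕜) * inner 𝕜 y x) • y)) =
      s * ‖inner 𝕜 x y‖ ^ 2 := by
    rw [inner_smul_right, mul_assoc, RCLike.re_ofReal_mul, inner_mul_symm_re_eq_norm, norm_mul,
      norm_inner_symm y x, sq]
  rw [norm_add_sq (𝕜 := 𝕜), re_inner, norm_smul, norm_mul, RCLike.norm_ofReal,
    norm_inner_symm y x, mul_pow, mul_pow, sq_abs]
  ring

theorem inner_eq_zero_of_forall_norm_le_norm_add_smul {x y : E}
    (h : ∀ c : 𝕜, ‖x‖ ≤ ‖x + c • y‖) : inner 𝕜 x y = 0 := by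
  -- Along `c = s * inner 𝕜 y x` the cross term is a real multiple of `s`, so a real quadratic in `s`
  -- detects the whole inner product, not just its real part.
  have quadratic_nonneg (s : ℝ) :
      0 ≤ ‖inner 𝕜 x y‖ ^ 2 * ‖y‖ ^ 2 * (s * s) + 2 * ‖inner 𝕜 x y‖ ^ 2 * s + 0 := by
    have norm_sq_le := pow_le_pow_left₀ (norm_nonneg x) (h (s * inner 𝕜 y x)) 2
    rw [norm_add_ofReal_mul_inner_smul_sq] at norm_sq_le
    linarith
  have sq_nonpos : (2 * ‖inner 𝕜 x y‖ ^ 2) ^ 2 ≤ 0 := by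
    simpa only [discrim, mul_zero, sub_zero] using discrim_le_zero quadratic_nonneg
  simpa using le_antisymm sq_nonpos (sq_nonneg _)

theorem rof_min_preserves_invariant_component_general
    (J : E → ℝ) (u₀ k : E) (t : ℝ) (hk : ∀ (u : E) (c : 𝕜), J (u + c • k) = J u) (ustar : E)
    (hmin : ∀ v : E,
      (1 / 2) * ‖ustar - u₀‖ ^ 2 + t * J ustar ≤ (1 / 2) * ‖v - u₀‖ ^ 2 + t * J v) :
    inner 𝕜 ustar k = inner 𝕜 u₀ k := by
  have residual_norm_le (c : 𝕜) : ‖ustar - u₀‖ ≤ ‖ustar - u₀ + c • k‖ := by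
    have energy_le := hmin (ustar + c • k)
    rw [hk, add_sub_right_comm] at energy_le
    exact le_of_sq_le_sq (by linarith) (norm_nonneg _)
  rw [← sub_eq_zero, ← inner_sub_left]
  exact inner_eq_zero_of_forall_norm_le_norm_add_smul residual_norm_le

end Orthogonality

/-- If `J` is convex and invariant in the direction `k`
(`J(u + c·k) = J(u)` for all `u, c`), then any minimizer `u*` of
`E(u) = (1/2)·‖u − u₀‖² + t·J(u)` satisfies `⟨u*, k⟩ = ⟨u₀, k⟩`
(e.g. the ROF step preserves the mean). -/
theorem rof_min_preserves_invariant_component {X : Type*} [NormedAddCommGroup X]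
    [InnerProductSpace ℝ X]
    (J : X → ℝ) (hconv : ConvexOn ℝ Set.univ J)
    (u₀ k : X) (t : ℝ) (ht : 0 < t)
    (hk : ∀ (u : X) (c : ℝ), J (u + c • k) = J u)
    (ustar : X)
    (hmin : ∀ v : X,
      (1 / 2) * ‖ustar - u₀‖ ^ 2 + t * J ustar ≤ (1 / 2) * ‖v - u₀‖ ^ 2 + t * J v) :
    (inner ℝ ustar k : ℝ) = (inner ℝ u₀ k : ℝ) :=
  rof_min_preserves_invariant_component_general J u₀ k t hk ustar hmin
end
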